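/- Let d ≥ 1, ℓ ∈ ℕ, L ∈ (0, 1], x₀ ∈ ℝ^d, and let Q ⊂ ℝ^d be an axis-parallel cube of side length L containing x₀. Let w : ℝ^d → [0, ∞) be measurable, and let R : Q × ℝ^d → ℂ be such that: for each ξ ∈ ℝ^d the map x ↦ R(x; ξ) is ℓ-times continuously differentiable on Q; ∂^k_x R(x₀; ξ) = 0 for every multi-index k with |k| ≤ ℓ and every ξ; for every multi-index k with |k| ≤ ℓ the map (x, ξ) ↦ ∂^k_x R(x; ξ) is jointly measurable with ∫_{ℝ^d} |∂^k_x R(x; ξ)|² w(ξ) dξ < ∞ for all x ∈ Q; and M := max over multi-indices k with |k| = ℓ of sup_{x∈Q} ∫_{ℝ^d} |∂^k_x R(x; ξ)|² w(ξ) dξ is finite. Then there is a constant C > 0 depending only on d and ℓ such that for every multi-index k with |k| ≤ ℓ and every x ∈ Q: ∫_{ℝ^d} |∂^k_x R(x; ξ)|² w(ξ) dξ ≤ C L^{2(ℓ−|k|)} M. -/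

import Mathlib

open MeasureTheory

noncomputable section

/-- Axis-parallel cube with corner `z` and side length `s`. -/
def cube (d : ℕ) (z : Fin d → ℝ) (s : ℝ) : Set (Fin d → ℝ) :=
  {y | ∀ t, z t ≤ y t ∧ y t ≤ z t + s}

/-- Partial derivative within a set `Q`, in the `j`-th coordinate, of a ℂ-valued map. -/
def pderW (d : ℕ) (Q : Set (Fin d → ℝ)) (j : Fin d) (f : (Fin d → ℝ) → ℂ) :
    (Fin d → ℝ) → ℂ :=
  fun x => fderivWithin ℝ f Q x (Pi.single j 1)

/-- Iterated partial derivative `∂^k` within `Q` associated with a multi-index `k ∈ ℕ^d`. -/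
def mderW (d : ℕ) (Q : Set (Fin d → ℝ)) (k : Fin d → ℕ) (f : (Fin d → ℝ) → ℂ) :
    (Fin d → ℝ) → ℂ :=
  (List.finRange d).foldr (fun j g => (pderW d Q j)^[k j] g) f

section PartialDerivatives

variable {d : ℕ} {Q : Set (Fin d → ℝ)} {f g : (Fin d → ℝ) → ℂ}

lemma pderW_eqOn (j : Fin d) (h : Set.EqOn f g Q) : Set.EqOn (pderW d Q j f) (pderW d Q j g) Q :=
  fun _ hx => by simp only [pderW, fderivWithin_congr h (h hx)]

lemma iterate_pderW_eqOn (j : Fin d) (n : ℕ) (h : Set.EqOn f g Q) :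
    Set.EqOn ((pderW d Q j)^[n] f) ((pderW d Q j)^[n] g) Q := by
  induction n with
  | zero => exact h
  | succ n ih =>
    simp only [Function.iterate_succ_apply']
    exact pderW_eqOn j ih

lemma contDiffOn_pderW (hQ : UniqueDiffOn ℝ Q) (j : Fin d) {n : ℕ}
    (hf : ContDiffOn ℝ ((n + 1 : ℕ) : WithTop ℕ∞) f Q) :
    ContDiffOn ℝ (n : WithTop ℕ∞) (pderW d Q j f) Q :=
  (hf.fderivWithin hQ (by norm_cast)).clm_apply contDiffOn_const

lemma contDiffOn_iterate_pderW (hQ : UniqueDiffOn ℝ Q) (j : Fin d) {n m : ℕ}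
    (hf : ContDiffOn ℝ ((n + m : ℕ) : WithTop ℕ∞) f Q) :
    ContDiffOn ℝ (n : WithTop ℕ∞) ((pderW d Q j)^[m] f) Q := by
  induction m generalizing f with
  | zero => exact hf
  | succ m ih => exact ih (contDiffOn_pderW hQ j hf)

/-- Partial derivatives within a convex set with nonempty interior commute. -/
lemma pderW_comm (hQ : Convex ℝ Q) (hne : (interior Q).Nonempty) (i j : Fin d)
    (hf : ContDiffOn ℝ ((2 : ℕ) : WithTop ℕ∞) f Q) :
    Set.EqOn (pderW d Q i (pderW d Q j f)) (pderW d Q j (pderW d Q i f)) Q := by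
  intro x hx
  have hu := uniqueDiffOn_convex hQ hne
  have hd : DifferentiableWithinAt ℝ (fderivWithin ℝ f Q) Q x :=
    (hf.fderivWithin (m := 1) hu (by norm_num)).differentiableOn (by norm_num) x hx
  have hsymm : IsSymmSndFDerivWithinAt ℝ f Q x := by
    refine (hf x hx).isSymmSndFDerivWithinAt (by simp) hu ?_ hx
    rw [hQ.closure_interior_eq_closure_of_nonempty_interior hne]
    exact subset_closure hx
  have key : ∀ u v : Fin d → ℝ, fderivWithin ℝ (fun y => fderivWithin ℝ f Q y u) Q x v =
      fderivWithin ℝ (fderivWithin ℝ f Q) Q x v u := by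
    intro u v
    rw [fderivWithin_clm_apply (hu x hx) hd (differentiableWithinAt_const u)]
    simp
  exact (key _ _).trans ((hsymm _ _).trans (key _ _).symm)

lemma pderW_iterate_comm (hQ : Convex ℝ Q) (hne : (interior Q).Nonempty) (i j : Fin d) {n : ℕ}
    (hf : ContDiffOn ℝ ((n + 1 : ℕ) : WithTop ℕ∞) f Q) :
    Set.EqOn (pderW d Q i ((pderW d Q j)^[n] f)) ((pderW d Q j)^[n] (pderW d Q i f)) Q := by
  induction n generalizing f with
  | zero => exact fun _ _ => rfl
  | succ n ih =>
    have hu := uniqueDiffOn_convex hQ hne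
    refine (ih (contDiffOn_pderW hu j hf)).trans
      (iterate_pderW_eqOn j n (pderW_comm hQ hne i j (hf.of_le ?_)))
    exact_mod_cast (by omega : 2 ≤ n + 1 + 1)

/-- Iterated partial derivatives along the coordinates of a list. -/
def listDerW (Q : Set (Fin d → ℝ)) (l : List (Fin d)) (k : Fin d → ℕ) (f : (Fin d → ℝ) → ℂ) :
    (Fin d → ℝ) → ℂ :=
  l.foldr (fun j g => (pderW d Q j)^[k j] g) f

lemma listDerW_congr {l : List (Fin d)} {k k' : Fin d → ℕ} (h : ∀ j ∈ l, k j = k' j) :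
    listDerW Q l k f = listDerW Q l k' f := by
  induction l with
  | nil => rfl
  | cons a l ih =>
    simp only [listDerW, List.foldr_cons] at ih ⊢
    rw [ih fun j hj => h j (List.mem_cons_of_mem a hj), h a List.mem_cons_self]

lemma contDiffOn_listDerW (hQ : UniqueDiffOn ℝ Q) (l : List (Fin d)) (k : Fin d → ℕ) {n : ℕ}
    (hf : ContDiffOn ℝ ((n + (l.map k).sum : ℕ) : WithTop ℕ∞) f Q) :
    ContDiffOn ℝ (n : WithTop ℕ∞) (listDerW Q l k f) Q := by
  induction l generalizing n with
  | nil => exact hf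
  | cons a l ih =>
    refine contDiffOn_iterate_pderW hQ a (ih ?_)
    simpa [add_assoc] using hf

lemma pderW_listDerW (hQ : Convex ℝ Q) (hne : (interior Q).Nonempty) {l : List (Fin d)}
    (hl : l.Nodup) {j : Fin d} (hj : j ∈ l) (k : Fin d → ℕ)
    (hf : ContDiffOn ℝ ((1 + (l.map k).sum : ℕ) : WithTop ℕ∞) f Q) :
    Set.EqOn (pderW d Q j (listDerW Q l k f)) (listDerW Q l (k + Pi.single j 1) f) Q := by
  have hu := uniqueDiffOn_convex hQ hne
  induction l with
  | nil => simp at hj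
  | cons a l ih =>
    obtain ⟨hal, hl⟩ := List.nodup_cons.1 hl
    by_cases hja : j = a
    · subst hja
      have hcongr : listDerW Q l (k + Pi.single j 1) f = listDerW Q l k f :=
        listDerW_congr fun i hi => by
          have : i ≠ j := fun h => hal (h ▸ hi)
          simp [this]
      intro x _
      change _ = (pderW d Q j)^[(k + Pi.single j 1 : Fin d → ℕ) j] (listDerW Q l (k + Pi.single j 1) f) x
      rw [hcongr, Pi.add_apply, Pi.single_eq_same, Function.iterate_succ_apply']
      rfl
    · have hjl : j ∈ l := (List.mem_cons.1 hj).resolve_left hja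
      have hsm : ContDiffOn ℝ ((k a + 1 : ℕ) : WithTop ℕ∞) (listDerW Q l k f) Q := by
        refine contDiffOn_listDerW hu l k (hf.of_le ?_)
        simp only [List.map_cons, List.sum_cons]
        exact_mod_cast (by omega)
      have hka : (k + Pi.single j 1 : Fin d → ℕ) a = k a := by simp [Ne.symm hja]
      change Set.EqOn (pderW d Q j ((pderW d Q a)^[k a] (listDerW Q l k f)))
        ((pderW d Q a)^[(k + Pi.single j 1 : Fin d → ℕ) a] (listDerW Q l (k + Pi.single j 1) f)) Q
      rw [hka]
      refine (pderW_iterate_comm hQ hne j a hsm).trans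
        (iterate_pderW_eqOn a _ (ih hl hjl (hf.of_le ?_)))
      simp only [List.map_cons, List.sum_cons]
      exact_mod_cast (by omega)

lemma sum_map_finRange (k : Fin d → ℕ) : ((List.finRange d).map k).sum = ∑ j, k j := by
  rw [← List.ofFn_eq_map, List.sum_ofFn]

lemma contDiffOn_mderW (hQ : UniqueDiffOn ℝ Q) (k : Fin d → ℕ) {n : ℕ}
    (hf : ContDiffOn ℝ ((n + ∑ j, k j : ℕ) : WithTop ℕ∞) f Q) :
    ContDiffOn ℝ (n : WithTop ℕ∞) (mderW d Q k f) Q :=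
  contDiffOn_listDerW hQ _ k (by rwa [sum_map_finRange])

lemma pderW_mderW (hQ : Convex ℝ Q) (hne : (interior Q).Nonempty) (j : Fin d) (k : Fin d → ℕ)
    (hf : ContDiffOn ℝ ((1 + ∑ j, k j : ℕ) : WithTop ℕ∞) f Q) :
    Set.EqOn (pderW d Q j (mderW d Q k f)) (mderW d Q (k + Pi.single j 1) f) Q :=
  pderW_listDerW hQ hne (List.nodup_finRange d) (List.mem_finRange j) k
    (by rwa [sum_map_finRange])

end PartialDerivatives

lemma sq_integral_le_integral_sq {φ : ℝ → ℝ} (hφ : ContinuousOn φ (Set.Icc 0 1)) :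
    (∫ t in (0 : ℝ)..1, φ t) ^ 2 ≤ ∫ t in (0 : ℝ)..1, φ t ^ 2 := by
  have huIcc : Set.uIcc (0 : ℝ) 1 = Set.Icc 0 1 := Set.uIcc_of_le zero_le_one
  set a := ∫ t in (0 : ℝ)..1, φ t with ha
  have h1 : IntervalIntegrable φ volume 0 1 := (huIcc ▸ hφ).intervalIntegrable
  have h2 : IntervalIntegrable (fun t => φ t ^ 2) volume 0 1 :=
    (huIcc ▸ hφ.pow 2 : ContinuousOn (fun t => φ t ^ 2) (Set.uIcc 0 1)).intervalIntegrable
  have h0 : 0 ≤ ∫ t in (0 : ℝ)..1, (φ t - a) ^ 2 :=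
    intervalIntegral.integral_nonneg zero_le_one fun _ _ => sq_nonneg _
  have heq : ∫ t in (0 : ℝ)..1, (φ t - a) ^ 2 = (∫ t in (0 : ℝ)..1, φ t ^ 2) - a ^ 2 := by
    have : ∀ t, (φ t - a) ^ 2 = φ t ^ 2 - 2 * a * φ t + a ^ 2 := fun t => by ring
    simp_rw [this]
    rw [intervalIntegral.integral_add (h2.sub (h1.const_mul _)) intervalIntegrable_const,
      intervalIntegral.integral_sub h2 (h1.const_mul _), intervalIntegral.integral_const_mul,
      ← ha, intervalIntegral.integral_const]
    simp
    ring
  linarith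

lemma norm_sq_le_lintegral_deriv {h h' : ℝ → ℂ}
    (hderiv : ∀ t ∈ Set.Icc (0 : ℝ) 1, HasDerivWithinAt h (h' t) (Set.Icc 0 1) t)
    (hcont : ContinuousOn h' (Set.Icc 0 1)) (h0 : h 0 = 0) :
    ENNReal.ofReal (‖h 1‖ ^ 2) ≤ ∫⁻ t in Set.Icc (0 : ℝ) 1, ENNReal.ofReal (‖h' t‖ ^ 2) := by
  have huIcc : Set.uIcc (0 : ℝ) 1 = Set.Icc 0 1 := Set.uIcc_of_le zero_le_one
  have hftc : ∫ t in (0 : ℝ)..1, h' t = h 1 := by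
    rw [intervalIntegral.integral_eq_sub_of_hasDerivAt_of_le zero_le_one
      (fun t ht => (hderiv t ht).continuousWithinAt)
      (fun t ht => (hderiv t (Set.Ioo_subset_Icc_self ht)).hasDerivAt (Icc_mem_nhds ht.1 ht.2))
      (huIcc ▸ hcont).intervalIntegrable, h0, sub_zero]
  have hle : ‖h 1‖ ^ 2 ≤ ∫ t in (0 : ℝ)..1, ‖h' t‖ ^ 2 := by
    rw [← hftc]
    refine le_trans ?_ (sq_integral_le_integral_sq hcont.norm)
    gcongr
    exact intervalIntegral.norm_integral_le_integral_norm zero_le_one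
  rw [intervalIntegral.integral_of_le zero_le_one, ← integral_Icc_eq_integral_Ioc] at hle
  refine (ENNReal.ofReal_le_ofReal hle).trans_eq ?_
  exact ofReal_integral_eq_lintegral_ofReal (hcont.norm.pow 2).integrableOn_Icc
    (Filter.Eventually.of_forall fun t => sq_nonneg _)

lemma norm_apply_sq_le {d : ℕ} (A : (Fin d → ℝ) →L[ℝ] ℂ) {v : Fin d → ℝ} {L : ℝ}
    (hv : ∀ j, |v j| ≤ L) :
    ‖A v‖ ^ 2 ≤ d * L ^ 2 * ∑ j, ‖A (Pi.single j 1)‖ ^ 2 := by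
  have h1 : ‖A v‖ ≤ ∑ j, |v j| * ‖A (Pi.single j 1)‖ := by
    conv_lhs => rw [pi_eq_sum_univ' v, map_sum]
    refine (norm_sum_le _ _).trans_eq (Finset.sum_congr rfl fun j _ => ?_)
    rw [map_smul, norm_smul, Real.norm_eq_abs]
  calc ‖A v‖ ^ 2 ≤ (∑ j, |v j| * ‖A (Pi.single j 1)‖) ^ 2 := by gcongr
    _ ≤ d * ∑ j, (|v j| * ‖A (Pi.single j 1)‖) ^ 2 := by
      simpa using sq_sum_le_card_mul_sum_sq (s := Finset.univ)
        (f := fun j => |v j| * ‖A (Pi.single j 1)‖)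
    _ ≤ d * ∑ j, L ^ 2 * ‖A (Pi.single j 1)‖ ^ 2 := by
      gcongr with j
      rw [mul_pow]
      gcongr
      exact hv j
    _ = _ := by rw [← Finset.mul_sum]; ring

/-- A `C¹` function on a convex set that vanishes at `x₀` is controlled by its partial
derivatives along the segment from `x₀`. -/
lemma norm_sq_le_lintegral_pderW {d : ℕ} {Q : Set (Fin d → ℝ)} (hQ : Convex ℝ Q)
    (hne : (interior Q).Nonempty) {g : (Fin d → ℝ) → ℂ}
    (hg : ContDiffOn ℝ ((1 : ℕ) : WithTop ℕ∞) g Q) {x₀ x : Fin d → ℝ} (hx₀ : x₀ ∈ Q)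
    (hx : x ∈ Q) (hg0 : g x₀ = 0) {L : ℝ} (hL : ∀ j, |x j - x₀ j| ≤ L) :
    ENNReal.ofReal (‖g x‖ ^ 2) ≤ ∫⁻ t in Set.Icc (0 : ℝ) 1,
      ENNReal.ofReal (d * L ^ 2 * ∑ j, ‖pderW d Q j g (x₀ + t • (x - x₀))‖ ^ 2) := by
  have hu := uniqueDiffOn_convex hQ hne
  have hmaps : Set.MapsTo (fun t : ℝ => x₀ + t • (x - x₀)) (Set.Icc 0 1) Q :=
    fun t ht => hQ.add_smul_sub_mem hx₀ hx ht
  have hγ : ∀ t : ℝ, HasDerivWithinAt (fun t : ℝ => x₀ + t • (x - x₀)) (x - x₀)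
      (Set.Icc 0 1) t := fun t => by
    simpa using (((hasDerivAt_id t).smul_const (x - x₀)).const_add x₀).hasDerivWithinAt
  have hmain := norm_sq_le_lintegral_deriv (h := fun t => g (x₀ + t • (x - x₀)))
    (h' := fun t => fderivWithin ℝ g Q (x₀ + t • (x - x₀)) (x - x₀))
    (fun t ht => ((hg.differentiableOn (by norm_num) _
      (hmaps ht)).hasFDerivWithinAt.comp_hasDerivWithinAt t (hγ t) hmaps))
    (((hg.continuousOn_fderivWithin hu (by norm_num)).comp
      (fun t _ => (hγ t).continuousWithinAt) hmaps).clm_apply continuousOn_const)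
    (by simpa using hg0)
  simp only [one_smul, add_sub_cancel] at hmain
  refine hmain.trans (lintegral_mono fun t => ENNReal.ofReal_le_ofReal ?_)
  exact norm_apply_sq_le _ hL

/-- Weighted `L²` bounds on functions `D j` dominating `G` along a segment
give a weighted `L²` bound on `G`. -/
lemma integral_le_of_lintegral_bound {d : ℕ} {G : (Fin d → ℝ) → ℂ}
    {D : Fin d → ℝ → (Fin d → ℝ) → ℂ} {wgt : (Fin d → ℝ) → ℝ} {a B : ℝ}
    (hw : Measurable wgt) (hw0 : ∀ ξ, 0 ≤ wgt ξ) (ha : 0 ≤ a)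
    (hG : Integrable fun ξ => ‖G ξ‖ ^ 2 * wgt ξ)
    (hGD : ∀ ξ, ENNReal.ofReal (‖G ξ‖ ^ 2) ≤
      ∫⁻ t in Set.Icc (0 : ℝ) 1, ENNReal.ofReal (a * ∑ j, ‖D j t ξ‖ ^ 2))
    (hDm : ∀ j, Measurable fun p : ℝ × (Fin d → ℝ) => D j p.1 p.2)
    (hDi : ∀ j, ∀ t ∈ Set.Icc (0 : ℝ) 1, Integrable fun ξ => ‖D j t ξ‖ ^ 2 * wgt ξ)
    (hDB : ∀ j, ∀ t ∈ Set.Icc (0 : ℝ) 1, ∫ ξ, ‖D j t ξ‖ ^ 2 * wgt ξ ≤ B) (hB : 0 ≤ B) :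
    ∫ ξ, ‖G ξ‖ ^ 2 * wgt ξ ≤ a * (d * B) := by
  set F : (Fin d → ℝ) → ℝ → ℝ := fun ξ t => a * ∑ j, ‖D j t ξ‖ ^ 2 * wgt ξ with hF
  have hFm : Measurable (Function.uncurry fun ξ t => ENNReal.ofReal (F ξ t)) := by
    refine ENNReal.measurable_ofReal.comp (Measurable.const_mul ?_ a)
    refine Finset.measurable_sum _ fun j _ => ?_
    exact ((((hDm j).comp measurable_swap).norm).pow_const 2).mul (hw.comp measurable_fst)
  have hpt : ∀ ξ, ENNReal.ofReal (‖G ξ‖ ^ 2 * wgt ξ) ≤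
      ∫⁻ t in Set.Icc (0 : ℝ) 1, ENNReal.ofReal (F ξ t) := by
    intro ξ
    rw [mul_comm, ENNReal.ofReal_mul (hw0 ξ)]
    refine (mul_le_mul_right (hGD ξ) _).trans_eq ?_
    rw [← lintegral_const_mul' _ _ ENNReal.ofReal_ne_top]
    refine lintegral_congr fun t => ?_
    rw [← ENNReal.ofReal_mul (hw0 ξ), hF]
    simp only [← Finset.sum_mul]
    congr 1
    ring
  have hinner : ∀ t ∈ Set.Icc (0 : ℝ) 1,
      ∫⁻ ξ, ENNReal.ofReal (F ξ t) ≤ ENNReal.ofReal (a * (d * B)) := by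
    intro t ht
    rw [← ofReal_integral_eq_lintegral_ofReal]
    · refine ENNReal.ofReal_le_ofReal ?_
      simp only [hF]
      rw [integral_const_mul, integral_finsetSum _ fun j _ => hDi j t ht]
      gcongr
      refine (Finset.sum_le_sum fun j _ => hDB j t ht).trans_eq ?_
      simp
    · exact (integrable_finsetSum _ fun j _ => hDi j t ht).const_mul a
    · exact Filter.Eventually.of_forall fun ξ =>
        mul_nonneg ha (Finset.sum_nonneg fun j _ => mul_nonneg (sq_nonneg _) (hw0 ξ))
  refine (ENNReal.ofReal_le_ofReal_iff (by positivity)).1 ?_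
  rw [ofReal_integral_eq_lintegral_ofReal hG
    (Filter.Eventually.of_forall fun ξ => mul_nonneg (sq_nonneg _) (hw0 ξ))]
  calc ∫⁻ ξ, ENNReal.ofReal (‖G ξ‖ ^ 2 * wgt ξ)
      ≤ ∫⁻ ξ, ∫⁻ t in Set.Icc (0 : ℝ) 1, ENNReal.ofReal (F ξ t) := lintegral_mono hpt
    _ = ∫⁻ t in Set.Icc (0 : ℝ) 1, ∫⁻ ξ, ENNReal.ofReal (F ξ t) :=
      lintegral_lintegral_swap hFm.aemeasurable
    _ ≤ ∫⁻ _ in Set.Icc (0 : ℝ) 1, ENNReal.ofReal (a * (d * B)) :=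
      setLIntegral_mono measurable_const hinner
    _ = ENNReal.ofReal (a * (d * B)) := by simp

lemma cube_eq_Icc (d : ℕ) (z : Fin d → ℝ) (s : ℝ) :
    cube d z s = Set.Icc z (fun t => z t + s) := by
  ext y
  simp [cube, Pi.le_def, forall_and]

lemma convex_cube (d : ℕ) (z : Fin d → ℝ) (s : ℝ) : Convex ℝ (cube d z s) := by
  rw [cube_eq_Icc]
  exact convex_Icc _ _

lemma nonempty_interior_cube (d : ℕ) (z : Fin d → ℝ) {s : ℝ} (hs : 0 < s) :
    (interior (cube d z s)).Nonempty := by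
  rw [cube_eq_Icc, ← Set.pi_univ_Icc, interior_pi_set Set.finite_univ]
  refine ⟨fun t => z t + s / 2, fun t _ => ?_⟩
  simp only [interior_Icc]
  constructor <;> linarith

lemma abs_sub_le_of_mem_cube {d : ℕ} {z x y : Fin d → ℝ} {s : ℝ} (hx : x ∈ cube d z s)
    (hy : y ∈ cube d z s) (j : Fin d) : |x j - y j| ≤ s := by
  rw [abs_le]
  constructor <;> linarith [(hx j).1, (hx j).2, (hy j).1, (hy j).2]

/-- if `R(·;ξ)` is `ℓ`-times continuously differentiable on a cube `Q` of
side length `L ∈ (0,1]`, all its partials of order `≤ ℓ` vanish at `x₀ ∈ Q`, and the weighted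
`L²(w)`-norms of the order-`ℓ` partials are uniformly bounded by `M` on `Q`, then for every
`|k| ≤ ℓ` and `x ∈ Q`, `∫ |∂^k R(x;ξ)|² w(ξ) dξ ≤ C L^{2(ℓ−|k|)} M` with `C = C(d,ℓ)`. -/
theorem stmt19 (d : ℕ) (hd : 1 ≤ d) (ℓ : ℕ) :
    ∃ C : ℝ, 0 < C ∧
      ∀ L : ℝ, 0 < L → L ≤ 1 →
      ∀ z x₀ : Fin d → ℝ, x₀ ∈ cube d z L →
      ∀ wgt : (Fin d → ℝ) → ℝ, Measurable wgt → (∀ ξ, 0 ≤ wgt ξ) →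
      ∀ R : (Fin d → ℝ) → (Fin d → ℝ) → ℂ,
        (∀ ξ : Fin d → ℝ, ContDiffOn ℝ ((ℓ : ℕ) : ℕ∞) (fun x => R x ξ) (cube d z L)) →
        (∀ k : Fin d → ℕ, (∑ j, k j) ≤ ℓ → ∀ ξ : Fin d → ℝ,
          mderW d (cube d z L) k (fun x => R x ξ) x₀ = 0) →
        (∀ k : Fin d → ℕ, (∑ j, k j) ≤ ℓ →
          Measurable (fun p : (Fin d → ℝ) × (Fin d → ℝ) =>
            mderW d (cube d z L) k (fun x => R x p.2) p.1) ∧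
          ∀ x ∈ cube d z L,
            Integrable (fun ξ : Fin d → ℝ =>
              ‖mderW d (cube d z L) k (fun x' => R x' ξ) x‖ ^ 2 * wgt ξ)) →
        ∀ M : ℝ,
          (∀ k : Fin d → ℕ, (∑ j, k j) = ℓ → ∀ x ∈ cube d z L,
            (∫ ξ : Fin d → ℝ,
              ‖mderW d (cube d z L) k (fun x' => R x' ξ) x‖ ^ 2 * wgt ξ) ≤ M) →
        ∀ k : Fin d → ℕ, (∑ j, k j) ≤ ℓ → ∀ x ∈ cube d z L,
          (∫ ξ : Fin d → ℝ,
              ‖mderW d (cube d z L) k (fun x' => R x' ξ) x‖ ^ 2 * wgt ξ) ≤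
            C * L ^ (2 * (ℓ - ∑ j, k j)) * M := by
  refine ⟨(d : ℝ) ^ (2 * ℓ), by positivity, ?_⟩
  intro L hL0 _ z x₀ hx₀ wgt hw hw0 R hR hvan hmeas M hM k hk x hx
  have hd1 : (1 : ℝ) ≤ d := by exact_mod_cast hd
  have hcvx := convex_cube d z L
  have hne := nonempty_interior_cube d z hL0
  have hM0 : 0 ≤ M := by
    refine le_trans (integral_nonneg fun ξ => mul_nonneg (sq_nonneg _) (hw0 ξ))
      (hM (Pi.single ⟨0, hd⟩ ℓ) (by simp) x₀ hx₀)
  have key : ∀ n : ℕ, ∀ k : Fin d → ℕ, (∑ j, k j) + n = ℓ → ∀ x ∈ cube d z L,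
      (∫ ξ : Fin d → ℝ, ‖mderW d (cube d z L) k (fun x' => R x' ξ) x‖ ^ 2 * wgt ξ) ≤
        (d : ℝ) ^ (2 * n) * L ^ (2 * n) * M := by
    intro n
    induction n with
    | zero => intro k hk x hx; simpa using hM k hk x hx
    | succ n ih =>
      intro k hk x hx
      have hsum : ∀ j : Fin d, ∑ i, (k + Pi.single j 1 : Fin d → ℕ) i = (∑ i, k i) + 1 := fun j => by
        simp [Finset.sum_add_distrib]
      have hmem : ∀ t ∈ Set.Icc (0 : ℝ) 1, x₀ + t • (x - x₀) ∈ cube d z L :=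
        fun t ht => hcvx.add_smul_sub_mem hx₀ hx ht
      have hsm : ∀ ξ (m : ℕ), m ≤ ℓ →
          ContDiffOn ℝ (m : WithTop ℕ∞) (fun x => R x ξ) (cube d z L) :=
        fun ξ m hm => (hR ξ).of_le (by exact_mod_cast hm)
      have hbound := integral_le_of_lintegral_bound (a := d * L ^ 2)
        (B := (d : ℝ) ^ (2 * n) * L ^ (2 * n) * M)
        (G := fun ξ => mderW d (cube d z L) k (fun x' => R x' ξ) x)
        (D := fun j t ξ => mderW d (cube d z L) (k + Pi.single j 1) (fun x' => R x' ξ)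
          (x₀ + t • (x - x₀)))
        hw hw0 (by positivity) ((hmeas k (by omega)).2 x hx) ?_ ?_ ?_ ?_ (by positivity)
      · refine hbound.trans_eq ?_
        ring
      · intro ξ
        refine (norm_sq_le_lintegral_pderW hcvx hne
          (contDiffOn_mderW (uniqueDiffOn_convex hcvx hne) k (hsm ξ _ (by omega))) hx₀ hx
          (hvan k (by omega) ξ) (abs_sub_le_of_mem_cube hx hx₀)).trans_eq ?_
        refine setLIntegral_congr_fun measurableSet_Icc fun t ht => ?_
        simp only [pderW_mderW hcvx hne _ k (hsm ξ _ (by omega)) (hmem t ht)]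
      · intro j
        exact (hmeas (k + Pi.single j 1) (by rw [hsum]; omega)).1.comp
          (f := fun p : ℝ × (Fin d → ℝ) => (x₀ + p.1 • (x - x₀), p.2)) (by fun_prop)
      · intro j t ht
        exact (hmeas (k + Pi.single j 1) (by rw [hsum]; omega)).2 _ (hmem t ht)
      · intro j t ht
        exact ih (k + Pi.single j 1) (by rw [hsum]; omega) _ (hmem t ht)
  refine (key (ℓ - ∑ j, k j) k (by omega) x hx).trans ?_
  gcongr
  omega
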